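/- Let d ≥ 2 and let D ⊂ ℝ^d be a strongly convex domain. Then there exist ε > 0 and A ≥ 1 such that for all x ∈ N_ε(∂D) ∩ D and all v ∈ ℝ^d: h_D(x,v) ≥ A^{-1}(‖v_N‖/(2δ_D(x)) + ‖v_T‖/δ_D(x)^{1/2}). -/

import Mathlib

/-!
The point is that a strongly convex domain is enclosed, uniformly in the boundary point `p`, by a
Euclidean ball tangent to the boundary at `p`: there is `c > 0` with
`c ‖p - y‖² ≤ ⟪p - y, n_p⟫` for all `p ∈ ∂D` and `y ∈ D`.

Given this, let `p` be a nearest boundary point of `x`, at distance `δ`, and let `v` point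
outwards, `a = ⟪v, n_p⟫ ≥ 0` (the Hilbert metric is even in `v`). If `y = x + s v ∈ D` with
`s > 0`, the inequality reads `c ((δ - s a)² + s² ‖v_T‖²) ≤ δ - s a`, whence `s a ≤ δ` and
`s √c ‖v_T‖ ≤ √δ`. So the exit time of the ray is bounded by both `δ / a` and
`√δ / (√c ‖v_T‖)`, and half its inverse already gives the estimate
(`hilbertFinsler_lower_of_nonneg`). The argument works for every `x ∈ D`, so the choice of `ε`
is immaterial.

The enclosing balls come from the defining function `u`. By convexity `du_p (y - p) ≤ 0` on the
closed domain (`fderiv_sub_nonpos`). In tangent directions the Hessian is positive, and Taylor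
expansion together with compactness of `∂D` times the unit sphere improves this to
`-du_p (y - p) ≥ c₀ ‖y - p‖²` for `y` near `p` (`exists_local_quadratic`); scaling along segments
from `p` extends it to the whole domain (`exists_global_quadratic`). Finally `du_p` is
`‖du_p‖ ⟪·, n_p⟫` because the ball of radius `δ` about `x` lies in the closed domain
(`fderiv_eq_norm_mul_inner`), and `‖du_p‖` is bounded on the compact boundary.
-/

open scoped RealInnerProductSpace ENNReal
open Metric Set Filter

noncomputable section

/-- Euclidean space `ℝ^d`. -/
abbrev Euc (d : ℕ) := EuclideanSpace ℝ (Fin d)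

/-- The open unit disk in `ℝ²`. -/
def unitDisk : Set (Euc 2) := Metric.ball 0 1

/-- Partial derivative of `f` at `z` in the `i`-th coordinate direction. -/
def pd {d : ℕ} (i : Fin 2) (f : Euc 2 → Euc d) (z : Euc 2) : Euc d :=
  fderiv ℝ f z (EuclideanSpace.single i 1)

/-- `f` is a conformal harmonic map on the unit disk: it is `C²`, its (vector)
Laplacian vanishes (equivalently, every component is harmonic), and at each point
its two partial derivatives are orthogonal and of equal norm. -/
def ConformalHarmonicOnDisk {d : ℕ} (f : Euc 2 → Euc d) : Prop :=
  ContDiffOn ℝ 2 f unitDisk ∧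
  (∀ z ∈ unitDisk,
    fderiv ℝ (pd 0 f) z (EuclideanSpace.single 0 1)
      + fderiv ℝ (pd 1 f) z (EuclideanSpace.single 1 1) = 0) ∧
  (∀ z ∈ unitDisk, ‖pd 0 f z‖ = ‖pd 1 f z‖ ∧ ⟪pd 0 f z, pd 1 f z⟫ = 0)

/-- The minimal (Forstnerič–Kalaj) metric of a domain `D ⊆ ℝ^d`:
`g_D(x,v) = inf {1/r : r > 0, f ∈ CH(𝔻, D), f 0 = x, f_x 0 = r • v}`. -/
def minMetric {d : ℕ} (D : Set (Euc d)) (x v : Euc d) : ℝ :=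
  sInf {c : ℝ | ∃ r : ℝ, 0 < r ∧ c = 1 / r ∧
    ∃ f : Euc 2 → Euc d, ConformalHarmonicOnDisk f ∧ (∀ z ∈ unitDisk, f z ∈ D) ∧
      f 0 = x ∧ pd 0 f 0 = r • v}

/-- `γ` is a piecewise `C¹` curve on `[a, b]`. -/
def PiecewiseC1On {d : ℕ} (γ : ℝ → Euc d) (a b : ℝ) : Prop :=
  ContinuousOn γ (Set.Icc a b) ∧
  ∃ (n : ℕ) (t : Fin (n + 2) → ℝ), Monotone t ∧ t 0 = a ∧ t (Fin.last (n + 1)) = b ∧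
    ∀ i : Fin (n + 1), ContDiffOn ℝ 1 γ (Set.Icc (t i.castSucc) (t i.succ))

/-- The minimal pseudodistance `ρ_D`: infimum of minimal lengths of piecewise `C¹`
curves in `D` joining `x` to `y`. -/
def minDist {d : ℕ} (D : Set (Euc d)) (x y : Euc d) : ℝ :=
  sInf {L : ℝ | ∃ γ : ℝ → Euc d, PiecewiseC1On γ 0 1 ∧
    (∀ t ∈ Set.Icc (0:ℝ) 1, γ t ∈ D) ∧ γ 0 = x ∧ γ 1 = y ∧
    L = ∫ t in (0:ℝ)..(1:ℝ), minMetric D (γ t) (deriv γ t)}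

/-- The Gromov product `(x|y)_o` with respect to the minimal pseudodistance of `D`. -/
def gromovProd {d : ℕ} (D : Set (Euc d)) (o x y : Euc d) : ℝ :=
  (minDist D x o + minDist D y o - minDist D x y) / 2

/-- `D` is hyperbolic: the minimal pseudodistance is a genuine distance. -/
def MinHyperbolic {d : ℕ} (D : Set (Euc d)) : Prop :=
  ∀ x ∈ D, ∀ y ∈ D, x ≠ y → 0 < minDist D x y

/-- The Hessian quadratic form of `u` at `x` in direction `v`. -/
def hessQ {d : ℕ} (u : Euc d → ℝ) (x v : Euc d) : ℝ :=
  fderiv ℝ (fun y => fderiv ℝ u y v) x v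

/-- `D` is a bounded domain with `C²` boundary, described by a `C²` defining
function `u` on a neighborhood `U` of `∂D` with nonvanishing differential. -/
def IsC2BoundedDomain {d : ℕ} (D : Set (Euc d)) : Prop :=
  IsOpen D ∧ IsConnected D ∧ Bornology.IsBounded D ∧
  ∃ (U : Set (Euc d)) (u : Euc d → ℝ), IsOpen U ∧ frontier D ⊆ U ∧ ContDiffOn ℝ 2 u U ∧
    D ∩ U = {x | x ∈ U ∧ u x < 0} ∧ frontier D = {x | x ∈ U ∧ u x = 0} ∧
    ∀ x ∈ frontier D, fderiv ℝ u x ≠ 0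

/-- `D` is a bounded strongly minimally convex domain: it has a `C²` defining function
which is strongly minimally plurisubharmonic near `∂D`, i.e. the trace of its Hessian
on every 2-plane (spanned by an orthonormal pair `v, w`) is strictly positive. -/
def IsStronglyMinimallyConvex {d : ℕ} (D : Set (Euc d)) : Prop :=
  IsOpen D ∧ IsConnected D ∧ Bornology.IsBounded D ∧
  ∃ (U : Set (Euc d)) (u : Euc d → ℝ), IsOpen U ∧ frontier D ⊆ U ∧ ContDiffOn ℝ 2 u U ∧
    D ∩ U = {x | x ∈ U ∧ u x < 0} ∧ frontier D = {x | x ∈ U ∧ u x = 0} ∧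
    (∀ x ∈ frontier D, fderiv ℝ u x ≠ 0) ∧
    (∀ x ∈ U, ∀ v w : Euc d, ‖v‖ = 1 → ‖w‖ = 1 → ⟪v, w⟫ = 0 →
      0 < hessQ u x v + hessQ u x w)

/-- `D` is a bounded strongly convex domain: convex, with a `C²` defining function whose
Hessian is positive definite on the tangent space at every boundary point
(equivalently, all principal curvatures of `∂D` w.r.t. the inner normal are positive). -/
def IsStronglyConvexDomain {d : ℕ} (D : Set (Euc d)) : Prop :=
  IsOpen D ∧ IsConnected D ∧ Bornology.IsBounded D ∧ Convex ℝ D ∧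
  ∃ (U : Set (Euc d)) (u : Euc d → ℝ), IsOpen U ∧ frontier D ⊆ U ∧ ContDiffOn ℝ 2 u U ∧
    D ∩ U = {x | x ∈ U ∧ u x < 0} ∧ frontier D = {x | x ∈ U ∧ u x = 0} ∧
    (∀ x ∈ frontier D, fderiv ℝ u x ≠ 0) ∧
    (∀ ξ ∈ frontier D, ∀ w : Euc d, w ≠ 0 → fderiv ℝ u ξ w = 0 → 0 < hessQ u ξ w)

/-- For `x ∈ D` with nearest boundary point `p`, the outer unit normal direction
`n_{π(x)} = (p - x)/‖p - x‖`. -/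
def nvec {d : ℕ} (x p : Euc d) : Euc d := ‖p - x‖⁻¹ • (p - x)

/-- Normal component of `v` at `x` with nearest boundary point `p`. -/
def vN {d : ℕ} (x p v : Euc d) : Euc d := ⟪v, nvec x p⟫ • nvec x p

/-- Tangential component of `v` at `x` with nearest boundary point `p`. -/
def vT {d : ℕ} (x p v : Euc d) : Euc d := v - vN x p v

/-- The intrinsic distance `H` on the boundary `∂D`: infimum of Euclidean lengths of
piecewise `C¹` curves in `∂D` joining two boundary points. -/
def bdist {d : ℕ} (D : Set (Euc d)) (ξ η : Euc d) : ℝ :=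
  sInf {L : ℝ | ∃ α : ℝ → Euc d, PiecewiseC1On α 0 1 ∧
    (∀ t ∈ Set.Icc (0:ℝ) 1, α t ∈ frontier D) ∧ α 0 = ξ ∧ α 1 = η ∧
    L = ∫ t in (0:ℝ)..(1:ℝ), ‖deriv α t‖}

/-- `h(x) = δ_D(x)^{1/2}`. -/
def hfun {d : ℕ} (D : Set (Euc d)) (x : Euc d) : ℝ :=
  Real.sqrt (Metric.infDist x (frontier D))

/-- The length of a curve with respect to the boundary Finsler metric
`F(x,v) = ‖v_N‖/(2 δ_D(x)) + ‖v_T‖/δ_D(x)^{1/2}`. -/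
def Flen {d : ℕ} (D : Set (Euc d)) (π : Euc d → Euc d) (γ : ℝ → Euc d) : ℝ :=
  ∫ t in (0:ℝ)..(1:ℝ),
    (‖vN (γ t) (π (γ t)) (deriv γ t)‖ / (2 * Metric.infDist (γ t) (frontier D))
      + ‖vT (γ t) (π (γ t)) (deriv γ t)‖ / Real.sqrt (Metric.infDist (γ t) (frontier D)))

/-- The filling Finsler metric `F`: the boundary Finsler metric on
`N = {δ_D ≤ ε}` and `c‖v‖` elsewhere. -/
def Fmet {d : ℕ} (D : Set (Euc d)) (π : Euc d → Euc d) (ε c : ℝ) (x v : Euc d) : ℝ :=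
  if Metric.infDist x (frontier D) ≤ ε then
    ‖vN x (π x) v‖ / (2 * Metric.infDist x (frontier D))
      + ‖vT x (π x) v‖ / Real.sqrt (Metric.infDist x (frontier D))
  else c * ‖v‖

/-- The intrinsic distance `d_F` associated to the filling Finsler metric `F`. -/
def dF {d : ℕ} (D : Set (Euc d)) (π : Euc d → Euc d) (ε c : ℝ) (x y : Euc d) : ℝ :=
  sInf {L : ℝ | ∃ γ : ℝ → Euc d, PiecewiseC1On γ 0 1 ∧
    (∀ t ∈ Set.Icc (0:ℝ) 1, γ t ∈ D) ∧ γ 0 = x ∧ γ 1 = y ∧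
    L = ∫ t in (0:ℝ)..(1:ℝ), Fmet D π ε c (γ t) (deriv γ t)}

/-- The hyperbolic filling distance
`d_H(x,y) = 2 log((H(π x, π y) + h(x) ∨ h(y)) / √(h(x) h(y)))`. -/
def dH {d : ℕ} (D : Set (Euc d)) (π : Euc d → Euc d) (x y : Euc d) : ℝ :=
  2 * Real.log ((bdist D (π x) (π y) + max (hfun D x) (hfun D y)) /
    Real.sqrt (hfun D x * hfun D y))

/-- `δ̂_D(x,v)`: the supremum over 2-dimensional linear subspaces `Λ ∋ v` of the
distance (in `ℝ≥0∞`, so `∞` if `x + Λ ⊆ D`) from `x` to `(x + Λ) \ D`. -/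
def deltaHat {d : ℕ} (D : Set (Euc d)) (x v : Euc d) : ℝ≥0∞ :=
  ⨆ (Λ : Submodule ℝ (Euc d)) (_ : Module.finrank ℝ Λ = 2) (_ : v ∈ Λ),
    ⨅ (y : Euc d) (_ : y - x ∈ Λ ∧ y ∉ D), edist x y

/-- The positive parameter at which the ray `t ↦ x + t • v` exits the convex domain `D`
(equal to `0`, by the `sInf ∅ = 0` convention, when the ray stays in `D`,
i.e. when the corresponding chord endpoint is the point at infinity). -/
def chordParam {d : ℕ} (D : Set (Euc d)) (x v : Euc d) : ℝ :=
  sInf {s : ℝ | 0 < s ∧ x + s • v ∉ D}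

/-- The Hilbert Finsler metric `h_D(x,v) = (‖v‖/2)(1/‖x-a‖ + 1/‖x-b‖)` of a convex
domain, with the convention `1/‖x-∞‖ = 0` (here `‖x-b‖ = chordParam D x v • ‖v‖` and
`‖x-a‖ = chordParam D x (-v) • ‖v‖`, and division by zero is zero). -/
def hilbertFinsler {d : ℕ} (D : Set (Euc d)) (x v : Euc d) : ℝ :=
  (1/2) * (1 / chordParam D x v + 1 / chordParam D x (-v))

/- The Hilbert distance of a convex domain: for `x ≠ y`,
`H_D(x,y) = ½ log((‖x-b‖ ‖y-a‖)/(‖x-a‖ ‖y-b‖))` where `a, x, y, b` are aligned on the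
chord through `x, y`, with the convention that ratios involving the point at infinity
(detected by `chordParam = 0`) are equal to `1`. -/
open Classical in
def hilbertDist {d : ℕ} (D : Set (Euc d)) (x y : Euc d) : ℝ :=
  if x = y then 0 else
    (1/2) * Real.log
      ((if chordParam D x (y - x) = 0 then 1
        else chordParam D x (y - x) / (chordParam D x (y - x) - 1)) *
       (if chordParam D x (x - y) = 0 then 1
        else (1 + chordParam D x (x - y)) / chordParam D x (x - y)))

/-! ### Calculus -/

/-- Second-order Taylor lower bound: `f'' ≥ m` on `[0, r]` gives
`f r ≥ f 0 + f' 0 * r + m r² / 2`. -/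
lemma taylor_lower_bound {f f' f'' : ℝ → ℝ} {m r : ℝ} (hr : 0 ≤ r)
    (h1 : ∀ s ∈ Icc 0 r, HasDerivAt f (f' s) s)
    (h2 : ∀ s ∈ Icc 0 r, HasDerivAt f' (f'' s) s)
    (hm : ∀ s ∈ Icc 0 r, m ≤ f'' s) :
    f 0 + f' 0 * r + m / 2 * r ^ 2 ≤ f r := by
  have key1 : ∀ s ∈ Icc 0 r, f' 0 + m * s ≤ f' s := by
    have hd : ∀ s ∈ Icc 0 r, HasDerivAt (fun s => f' s - m * s) (f'' s - m) s := by
      intro s hs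
      have := (h2 s hs).sub ((hasDerivAt_id s).const_mul m)
      rw [mul_one] at this
      exact this
    have mono : MonotoneOn (fun s => f' s - m * s) (Icc 0 r) := by
      refine monotoneOn_of_deriv_nonneg (convex_Icc 0 r)
        (fun s hs => (hd s hs).continuousAt.continuousWithinAt)
        (fun s hs => (hd s (interior_subset hs)).differentiableAt.differentiableWithinAt) ?_
      intro s hs
      rw [(hd s (interior_subset hs)).deriv]
      linarith [hm s (interior_subset hs)]
    intro s hs
    have := mono (left_mem_Icc.2 hr) hs hs.1
    simp only [mul_zero, sub_zero] at this
    linarith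
  have hd : ∀ s ∈ Icc 0 r, HasDerivAt (fun s => f s - f' 0 * s - m / 2 * s ^ 2)
      (f' s - f' 0 - m * s) s := by
    intro s hs
    have := ((h1 s hs).sub ((hasDerivAt_id s).const_mul (f' 0))).sub
      ((hasDerivAt_pow 2 s).const_mul (m / 2))
    have e : f' s - f' 0 * 1 - m / 2 * (((2 : ℕ) : ℝ) * s ^ (2 - 1)) = f' s - f' 0 - m * s := by
      norm_num
      ring
    rw [e] at this
    exact this
  have mono : MonotoneOn (fun s => f s - f' 0 * s - m / 2 * s ^ 2) (Icc 0 r) := by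
    refine monotoneOn_of_deriv_nonneg (convex_Icc 0 r)
      (fun s hs => (hd s hs).continuousAt.continuousWithinAt)
      (fun s hs => (hd s (interior_subset hs)).differentiableAt.differentiableWithinAt) ?_
    intro s hs
    rw [(hd s (interior_subset hs)).deriv]
    linarith [key1 s (interior_subset hs)]
  have := mono (left_mem_Icc.2 hr) (right_mem_Icc.2 hr) hr
  norm_num at this
  linarith

lemma hasDerivAt_line {d : ℕ} {U : Set (Euc d)} {u : Euc d → ℝ} (hU : IsOpen U)
    (hu : ContDiffOn ℝ 2 u U) {p w : Euc d} {s : ℝ} (hs : p + s • w ∈ U) :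
    HasDerivAt (fun s : ℝ => u (p + s • w)) (fderiv ℝ u (p + s • w) w) s ∧
      HasDerivAt (fun s : ℝ => fderiv ℝ u (p + s • w) w) (hessQ u (p + s • w) w) s := by
  have hl : HasDerivAt (fun s : ℝ => p + s • w) w s := by
    simpa using ((hasDerivAt_id s).smul_const w).const_add p
  have h1 : DifferentiableAt ℝ u (p + s • w) :=
    (hu.differentiableOn (by norm_num)).differentiableAt (hU.mem_nhds hs)
  have h2 : DifferentiableAt ℝ (fderiv ℝ u) (p + s • w) :=
    ((hu.fderiv_of_isOpen hU (m := 1) (by norm_num)).differentiableOn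
      (by norm_num)).differentiableAt (hU.mem_nhds hs)
  have h3 : DifferentiableAt ℝ (fun y => fderiv ℝ u y w) (p + s • w) :=
    h2.clm_apply (differentiableAt_const w)
  exact ⟨h1.hasFDerivAt.comp_hasDerivAt s hl,
    h3.hasFDerivAt.comp_hasDerivAt (f := fun s : ℝ => p + s • w) s hl⟩

/-- The first and second derivatives of a `C²` function depend jointly continuously on the base
point and the direction. -/
lemma continuousAt_fderiv_hessQ {d : ℕ} {U : Set (Euc d)} {u : Euc d → ℝ} (hU : IsOpen U)
    (hu : ContDiffOn ℝ 2 u U) {p w : Euc d} (hp : p ∈ U) :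
    ContinuousAt (fun z : Euc d × Euc d => fderiv ℝ u z.1 z.2) (p, w) ∧
      ContinuousAt (fun z : Euc d × Euc d => hessQ u z.1 z.2) (p, w) := by
  have hd1 : ContDiffOn ℝ 1 (fderiv ℝ u) U := hu.fderiv_of_isOpen hU (by norm_num)
  have hd2 : ContinuousOn (fderiv ℝ (fderiv ℝ u)) U :=
    hd1.continuousOn_fderiv_of_isOpen hU (by norm_num)
  have c1 : ContinuousAt (fun z : Euc d × Euc d => fderiv ℝ u z.1) (p, w) :=
    ContinuousAt.comp (f := Prod.fst) (x := (p, w))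
      (hd1.continuousOn.continuousAt (hU.mem_nhds hp)) continuousAt_fst
  have c2 : ContinuousAt (fun z : Euc d × Euc d => fderiv ℝ (fderiv ℝ u) z.1) (p, w) :=
    ContinuousAt.comp (f := Prod.fst) (x := (p, w))
      (hd2.continuousAt (hU.mem_nhds hp)) continuousAt_fst
  refine ⟨c1.clm_apply continuousAt_snd, ?_⟩
  have c3 : ContinuousAt
      (fun z : Euc d × Euc d => fderiv ℝ (fderiv ℝ u) z.1 z.2 z.2) (p, w) :=
    (c2.clm_apply continuousAt_snd).clm_apply continuousAt_snd
  refine c3.congr ?_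
  have : ∀ᶠ z : Euc d × Euc d in nhds (p, w), z.1 ∈ U :=
    continuousAt_fst.eventually (hU.mem_nhds hp)
  filter_upwards [this] with z hz
  have hdz : DifferentiableAt ℝ (fderiv ℝ u) z.1 :=
    (hd1.differentiableOn (by norm_num)).differentiableAt (hU.mem_nhds hz)
  simp [hessQ, fderiv_clm_apply hdz (differentiableAt_const z.2)]

/-! ### Geometry of the defining function -/

section Geometry

variable {d : ℕ} {D U : Set (Euc d)} {u : Euc d → ℝ}

lemma u_nonpos_of_mem_closure (hDU : D ∩ U = {x | x ∈ U ∧ u x < 0})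
    (hfr : frontier D = {x | x ∈ U ∧ u x = 0}) {y : Euc d} (hy : y ∈ closure D) (hyU : y ∈ U) :
    u y ≤ 0 := by
  rw [closure_eq_self_union_frontier] at hy
  rcases hy with hy | hy
  · have : y ∈ D ∩ U := ⟨hy, hyU⟩
    rw [hDU] at this
    exact this.2.le
  · rw [hfr] at hy
    exact hy.2.le

/-- Convexity: the kernel of `du_p` is a supporting hyperplane at `p`. -/
lemma fderiv_sub_nonpos (hconv : Convex ℝ D) (hU : IsOpen U) (hu : ContDiffOn ℝ 2 u U)
    (hDU : D ∩ U = {x | x ∈ U ∧ u x < 0}) (hfr : frontier D = {x | x ∈ U ∧ u x = 0})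
    {p y : Euc d} (hp : p ∈ frontier D) (hy : y ∈ closure D) :
    fderiv ℝ u p (y - p) ≤ 0 := by
  have hpU : p ∈ U ∧ u p = 0 := by rw [hfr] at hp; exact hp
  have hmax : IsLocalMaxOn u (closure D) p := by
    filter_upwards [self_mem_nhdsWithin, mem_nhdsWithin_of_mem_nhds (hU.mem_nhds hpU.1)]
      with z hz hzU
    rw [hpU.2]
    exact u_nonpos_of_mem_closure hDU hfr hz hzU
  have hdiff : DifferentiableAt ℝ u p :=
    (hu.differentiableOn (by norm_num)).differentiableAt (hU.mem_nhds hpU.1)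
  exact hmax.hasFDerivWithinAt_nonpos hdiff.hasFDerivAt.hasFDerivWithinAt
    (sub_mem_posTangentConeAt_of_segment_subset
      (hconv.closure.segment_subset (frontier_subset_closure hp) hy))

/-- Local form of the quadratic estimate, uniform over the boundary point and the unit
direction: a direction into which the closed domain extends by a length `r < ρ` makes an angle of
at least order `r` with the tangent hyperplane. -/
lemma exists_local_quadratic (hbdd : Bornology.IsBounded D) (hconv : Convex ℝ D)
    (hU : IsOpen U) (hu : ContDiffOn ℝ 2 u U)
    (hDU : D ∩ U = {x | x ∈ U ∧ u x < 0}) (hfr : frontier D = {x | x ∈ U ∧ u x = 0})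
    (hhess : ∀ ξ ∈ frontier D, ∀ w : Euc d, w ≠ 0 → fderiv ℝ u ξ w = 0 → 0 < hessQ u ξ w) :
    ∃ ρ > 0, ∃ c > 0, ∀ z ∈ frontier D ×ˢ sphere (0 : Euc d) 1,
      ∀ r, 0 < r → r < ρ → z.1 + r • z.2 ∈ closure D →
        c * r ≤ -(fderiv ℝ u z.1 z.2) := by
  have hK : IsCompact (frontier D ×ˢ sphere (0 : Euc d) 1) := by
    refine IsCompact.prod ?_ (isCompact_sphere _ _)
    exact Metric.isCompact_of_isClosed_isBounded isClosed_frontier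
      (hbdd.closure.subset frontier_subset_closure)
  refine (hK.induction_on (p := fun S => ∃ ρ > 0, ∃ c > 0,
    ∀ z ∈ S, z ∈ frontier D ×ˢ sphere (0 : Euc d) 1 →
      ∀ r, 0 < r → r < ρ → z.1 + r • z.2 ∈ closure D →
        c * r ≤ -(fderiv ℝ u z.1 z.2)) ?_ ?_ ?_ ?_).imp fun ρ h => ⟨h.1, ?_⟩
  · exact ⟨1, one_pos, 1, one_pos, by simp⟩
  · rintro S T hST ⟨ρ, hρ, c, hc, h⟩
    exact ⟨ρ, hρ, c, hc, fun z hz => h z (hST hz)⟩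
  · rintro S T ⟨ρ, hρ, c, hc, h⟩ ⟨ρ', hρ', c', hc', h'⟩
    refine ⟨min ρ ρ', lt_min hρ hρ', min c c', lt_min hc hc', ?_⟩
    rintro z (hz | hz) hzK r hr0 hr hin
    · exact (mul_le_mul_of_nonneg_right (min_le_left _ _) hr0.le).trans
        (h z hz hzK r hr0 (hr.trans_le (min_le_left _ _)) hin)
    · exact (mul_le_mul_of_nonneg_right (min_le_right _ _) hr0.le).trans
        (h' z hz hzK r hr0 (hr.trans_le (min_le_right _ _)) hin)
  · rintro ⟨p₀, w₀⟩ ⟨hp₀, hw₀⟩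
    simp only at hp₀ hw₀
    have hp₀U : p₀ ∈ U := by rw [hfr] at hp₀; exact hp₀.1
    obtain ⟨hc1, hc2⟩ := continuousAt_fderiv_hessQ hU hu (w := w₀) hp₀U
    rcases lt_trichotomy (fderiv ℝ u p₀ w₀) 0 with hlt | heq | hgt
    · set a := fderiv ℝ u p₀ w₀ with ha
      have hev := hc1.eventually (gt_mem_nhds (show a < a / 2 by linarith))
      refine ⟨_, mem_nhdsWithin_of_mem_nhds hev, 1, one_pos, -(a / 2), by linarith, ?_⟩
      intro z hz _ r hr0 hr _
      have hz' : fderiv ℝ u z.1 z.2 < a / 2 := hz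
      nlinarith
    · -- Tangent direction: the Hessian stays above `m` along short segments near `(p₀, w₀)`.
      have hw0 : w₀ ≠ 0 := by
        rintro rfl
        simp at hw₀
      have hpos := hhess p₀ hp₀ w₀ hw0 heq
      set m := hessQ u p₀ w₀ / 2 with hm
      have hmpos : 0 < m := by positivity
      have hev := (hc2.eventually
        (lt_mem_nhds (show m < hessQ u p₀ w₀ by linarith))).and
        (continuousAt_fst.eventually (hU.mem_nhds hp₀U))
      obtain ⟨η, hη, hball⟩ := Metric.eventually_nhds_iff_ball.1 hev
      refine ⟨ball (p₀, w₀) (η / 2), mem_nhdsWithin_of_mem_nhds (ball_mem_nhds _ (by linarith)),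
        η / 2, by linarith, m / 2, by linarith, ?_⟩
      rintro ⟨p, w⟩ hz ⟨hp, hw⟩ r hr0 hr hin
      simp only at hp hw hin ⊢
      have hwn : ‖w‖ = 1 := by simpa using hw
      have hpU : p ∈ U ∧ u p = 0 := by rw [hfr] at hp; exact hp
      rw [mem_ball, Prod.dist_eq, max_lt_iff] at hz
      have hseg : ∀ s ∈ Icc 0 r, m < hessQ u (p + s • w) w ∧ p + s • w ∈ U := by
        intro s hs
        refine hball (p + s • w, w) ?_
        rw [mem_ball, Prod.dist_eq, max_lt_iff]
        refine ⟨?_, by simpa using hz.2.trans (by linarith)⟩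
        have h1 : dist (p + s • w) p = s := by
          simp [norm_smul, hwn, abs_of_nonneg hs.1]
        have h2 := dist_triangle (p + s • w) p p₀
        have h3 := hz.1
        have h4 := hs.2
        simp only at h3 ⊢
        linarith
      have htay := taylor_lower_bound (f := fun s : ℝ => u (p + s • w))
        (f' := fun s => fderiv ℝ u (p + s • w) w) (f'' := fun s => hessQ u (p + s • w) w)
        (m := m) hr0.le
        (fun s hs => (hasDerivAt_line hU hu (hseg s hs).2).1)
        (fun s hs => (hasDerivAt_line hU hu (hseg s hs).2).2)
        (fun s hs => (hseg s hs).1.le)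
      simp only [zero_smul, add_zero, hpU.2] at htay
      have hle := u_nonpos_of_mem_closure hDU hfr hin (hseg r ⟨hr0.le, le_rfl⟩).2
      have : r * (fderiv ℝ u p w + m / 2 * r) ≤ 0 := by nlinarith
      have := nonpos_of_mul_nonpos_right this hr0
      linarith
    · -- Outward directions do not enter the closed domain.
      have hev := hc1.eventually (lt_mem_nhds hgt)
      refine ⟨_, mem_nhdsWithin_of_mem_nhds hev, 1, one_pos, 1, one_pos, ?_⟩
      intro z hz hzK r hr0 hr hin
      have hz' : 0 < fderiv ℝ u z.1 z.2 := hz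
      have := fderiv_sub_nonpos hconv hU hu hDU hfr hzK.1 hin
      rw [add_sub_cancel_left, map_smul, smul_eq_mul] at this
      nlinarith
  · obtain ⟨_, c, hc, hall⟩ := h
    exact ⟨c, hc, fun z hz => hall z hz hz⟩

/-- Global quadratic estimate: the domain lies in the region
`-du_p(y - p) ≥ c ‖y - p‖²` for every boundary point `p`. -/
lemma exists_global_quadratic (hbdd : Bornology.IsBounded D) (hconv : Convex ℝ D)
    (hU : IsOpen U) (hu : ContDiffOn ℝ 2 u U)
    (hDU : D ∩ U = {x | x ∈ U ∧ u x < 0}) (hfr : frontier D = {x | x ∈ U ∧ u x = 0})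
    (hhess : ∀ ξ ∈ frontier D, ∀ w : Euc d, w ≠ 0 → fderiv ℝ u ξ w = 0 → 0 < hessQ u ξ w) :
    ∃ c > 0, ∀ p ∈ frontier D, ∀ y ∈ closure D,
      c * ‖y - p‖ ^ 2 ≤ -(fderiv ℝ u p (y - p)) := by
  obtain ⟨ρ, hρ, c, hc, h⟩ := exists_local_quadratic hbdd hconv hU hu hDU hfr hhess
  obtain ⟨M, hM0, hM⟩ : ∃ M > 0, ∀ p ∈ closure D, ∀ y ∈ closure D, ‖y - p‖ ≤ M := by
    obtain ⟨C, hC⟩ := Metric.isBounded_iff.1 hbdd.closure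
    refine ⟨max C 1, by positivity, fun p hp y hy => ?_⟩
    rw [← dist_eq_norm]
    exact (hC hy hp).trans (le_max_left _ _)
  refine ⟨c * min 1 (ρ / (2 * M)), by positivity, fun p hp y hy => ?_⟩
  rcases eq_or_ne y p with rfl | hne
  · simp
  set R := ‖y - p‖ with hR
  have hRpos : 0 < R := norm_pos_iff.2 (sub_ne_zero.2 hne)
  have hRM : R ≤ M := hM p (frontier_subset_closure hp) y hy
  -- Shrink the segment from `p` to `y` by the factor `t`, so that its length `t * R` is below `ρ`.
  set t := min 1 (ρ / (2 * M)) with ht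
  have ht0 : 0 < t := by positivity
  have ht1 : t ≤ 1 := min_le_left _ _
  have htR : t * R < ρ := by
    have h1 : t * R ≤ ρ / (2 * M) * M := by
      have : t ≤ ρ / (2 * M) := min_le_right _ _
      gcongr
    have h2 : ρ / (2 * M) * M = ρ / 2 := by field_simp
    linarith
  have hin : p + (t * R) • (R⁻¹ • (y - p)) ∈ closure D := by
    rw [smul_smul, mul_assoc, mul_inv_cancel₀ hRpos.ne', mul_one]
    exact hconv.closure.add_smul_sub_mem (frontier_subset_closure hp) hy ⟨ht0.le, ht1⟩
  have := h (p, R⁻¹ • (y - p))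
    ⟨hp, by simp [norm_smul, ← hR, abs_of_pos hRpos, hRpos.ne']⟩ (t * R) (by positivity) htR hin
  simp only [map_smul, smul_eq_mul] at this
  have h5 := mul_le_mul_of_nonneg_left this hRpos.le
  have h6 : R * -(R⁻¹ * fderiv ℝ u p (y - p)) = -(fderiv ℝ u p (y - p)) := by
    field_simp
  rw [h6] at h5
  linarith

/-- The ball around an interior point reaching the boundary lies in the closed domain. -/
lemma closedBall_subset_closure (hop : IsOpen D) {x : Euc d} (hx : x ∈ D)
    (hδ : 0 < infDist x (frontier D)) :
    closedBall x (infDist x (frontier D)) ⊆ closure D := by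
  rw [← closure_ball x hδ.ne']
  refine closure_mono ?_
  refine (convex_ball x _).isPreconnected.subset_of_closure_inter_subset hop
    ⟨x, mem_ball_self hδ, hx⟩ ?_
  rintro y ⟨hy, hyb⟩
  by_contra hyD
  have hyf : y ∈ frontier D := by rw [hop.frontier_eq]; exact ⟨hy, hyD⟩
  have := infDist_le_dist_of_mem (x := x) hyf
  rw [mem_ball'] at hyb
  linarith

/-- At a nearest boundary point `p` of `x`, the normal `nvec x p` is the normalized gradient of
the defining function. -/
lemma fderiv_eq_norm_mul_inner (hop : IsOpen D) (hconv : Convex ℝ D) (hU : IsOpen U)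
    (hu : ContDiffOn ℝ 2 u U)
    (hDU : D ∩ U = {x | x ∈ U ∧ u x < 0}) (hfr : frontier D = {x | x ∈ U ∧ u x = 0})
    {x p : Euc d} (hx : x ∈ D) (hp : p ∈ frontier D)
    (hdist : dist x p = infDist x (frontier D)) (hδ : 0 < infDist x (frontier D))
    (hne : fderiv ℝ u p ≠ 0) (v : Euc d) :
    fderiv ℝ u p v = ‖fderiv ℝ u p‖ * ⟪v, nvec x p⟫ := by
  set g := (InnerProductSpace.toDual ℝ (Euc d)).symm (fderiv ℝ u p) with hg
  have hgv : ∀ v, fderiv ℝ u p v = ⟪g, v⟫ := fun v => by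
    rw [hg, InnerProductSpace.toDual_symm_apply]
  have hgn : ‖fderiv ℝ u p‖ = ‖g‖ := by rw [hg, LinearIsometryEquiv.norm_map]
  have hgpos : 0 < ‖g‖ := by rw [← hgn]; exact norm_pos_iff.2 hne
  set δ := infDist x (frontier D) with hδdef
  have hpx : ‖p - x‖ = δ := by rw [← dist_eq_norm, dist_comm, hdist]
  have hnn : ‖nvec x p‖ = 1 := by
    rw [nvec, norm_smul, norm_inv, norm_norm, hpx, inv_mul_cancel₀ hδ.ne']
  have hpxn : p - x = δ • nvec x p := by
    rw [nvec, hpx, smul_smul, mul_inv_cancel₀ hδ.ne', one_smul]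
  -- Test the supporting hyperplane on the farthest point of the ball in the gradient direction.
  have hz : x + (δ / ‖g‖) • g ∈ closure D := by
    refine closedBall_subset_closure hop hx hδ ?_
    rw [mem_closedBall, dist_eq_norm, add_sub_cancel_left, norm_smul, Real.norm_eq_abs,
      abs_of_pos (by positivity), div_mul_cancel₀ _ hgpos.ne']
  have hle := fderiv_sub_nonpos hconv hU hu hDU hfr hp hz
  have hrew : x + (δ / ‖g‖) • g - p = (δ / ‖g‖) • g - δ • nvec x p := by
    rw [← hpxn]; abel
  rw [hgv, hrew, inner_sub_right, inner_smul_right, inner_smul_right,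
    real_inner_self_eq_norm_sq] at hle
  have h1 : δ / ‖g‖ * ‖g‖ ^ 2 = δ * ‖g‖ := by field_simp
  rw [h1, ← mul_sub] at hle
  have h2 := nonpos_of_mul_nonpos_right hle hδ
  have h3 := real_inner_le_norm g (nvec x p)
  have h4 : ⟪g, nvec x p⟫ = ‖g‖ * ‖nvec x p‖ := by
    rw [hnn] at h3 ⊢
    linarith
  rw [inner_eq_norm_mul_iff_real, hnn, one_smul] at h4
  rw [hgv, hgn]
  conv_lhs => rw [h4]
  rw [real_inner_smul_left, real_inner_comm]

end Geometry

/-! ### Chord parameters -/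

section Chord

variable {d : ℕ} {D : Set (Euc d)}

lemma chordParam_nonneg (x v : Euc d) : 0 ≤ chordParam D x v :=
  Real.sInf_nonneg fun _ hs => hs.1.le

lemma chordParam_pos (hop : IsOpen D) (hbdd : Bornology.IsBounded D) {x v : Euc d} (hx : x ∈ D)
    (hv : v ≠ 0) : 0 < chordParam D x v := by
  have hvn : 0 < ‖v‖ := norm_pos_iff.2 hv
  have hnemp : {s : ℝ | 0 < s ∧ x + s • v ∉ D}.Nonempty := by
    obtain ⟨C, hC⟩ := Metric.isBounded_iff.1 hbdd
    have hC0 : 0 ≤ C := dist_nonneg.trans (hC hx hx)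
    refine ⟨(C + 1) / ‖v‖, by positivity, fun hmem => ?_⟩
    have := hC hmem hx
    rw [dist_eq_norm, add_sub_cancel_left, norm_smul, Real.norm_eq_abs,
      abs_of_pos (by positivity), div_mul_cancel₀ _ hvn.ne'] at this
    linarith
  obtain ⟨η, hη, hball⟩ := Metric.isOpen_iff.1 hop x hx
  refine lt_of_lt_of_le (show 0 < η / ‖v‖ by positivity) (le_csInf hnemp ?_)
  rintro s ⟨hs0, hs⟩
  by_contra hlt
  push Not at hlt
  refine hs (hball ?_)
  rw [mem_ball, dist_eq_norm, add_sub_cancel_left, norm_smul, Real.norm_eq_abs, abs_of_pos hs0]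
  rwa [lt_div_iff₀ hvn] at hlt

lemma chordParam_mul_le {x v : Euc d} {K B : ℝ} (hB : 0 < B)
    (h : ∀ s, 0 < s → x + s • v ∈ D → s * K ≤ B) : chordParam D x v * K ≤ B := by
  rcases le_or_gt K 0 with hK | hK
  · exact (mul_nonpos_of_nonneg_of_nonpos (chordParam_nonneg x v) hK).trans hB.le
  rw [← le_div_iff₀ hK]
  refine le_of_forall_gt_imp_ge_of_dense fun s hs => ?_
  have hs0 : 0 < s := (div_pos hB hK).trans hs
  refine csInf_le ⟨0, fun t ht => ht.1.le⟩ ⟨hs0, fun hmem => ?_⟩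
  have := h s hs0 hmem
  rw [← le_div_iff₀ hK] at this
  linarith

lemma hilbertFinsler_neg (x v : Euc d) : hilbertFinsler D x (-v) = hilbertFinsler D x v := by
  unfold hilbertFinsler
  rw [neg_neg, add_comm]

end Chord

/-- One-sided estimate for an outward pointing vector: if `D` lies in the ball
`c ‖p - y‖² ≤ ⟪p - y, n⟫` tangent at `p`, where `n = nvec x p`, the exit time in direction `v`
is at most `δ / ⟪v, n⟫` and at most `√δ / (√c ‖v_T‖)`. -/
lemma hilbertFinsler_lower_of_nonneg {d : ℕ} {D : Set (Euc d)} (hop : IsOpen D)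
    (hbdd : Bornology.IsBounded D) {x p : Euc d} (hx : x ∈ D) {c δ : ℝ} (hc : 0 < c)
    (hδ : 0 < δ) (hpx : ‖p - x‖ = δ)
    (hball : ∀ y ∈ D, c * ‖p - y‖ ^ 2 ≤ ⟪p - y, nvec x p⟫) {v : Euc d} (hv : v ≠ 0)
    (ha : 0 ≤ ⟪v, nvec x p⟫) :
    1 / 4 * (⟪v, nvec x p⟫ / δ + Real.sqrt c * ‖vT x p v‖ / Real.sqrt δ)
      ≤ hilbertFinsler D x v := by
  have hnn : ‖nvec x p‖ = 1 := by
    rw [nvec, norm_smul, norm_inv, norm_norm, hpx, inv_mul_cancel₀ hδ.ne']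
  have hpxn : p - x = δ • nvec x p := by
    rw [nvec, hpx, smul_smul, mul_inv_cancel₀ hδ.ne', one_smul]
  set n := nvec x p with hn
  set a := ⟪v, n⟫ with hadef
  set T := vT x p v with hT
  have hvdec : v = a • n + T := by
    rw [hT, vT, vN, ← hn, ← hadef]; abel
  have hTn : ⟪n, T⟫ = 0 := by
    rw [hT, vT, vN, ← hn, ← hadef, inner_sub_right, inner_smul_right,
      real_inner_self_eq_norm_sq, hnn, hadef, real_inner_comm]
    ring
  have key : ∀ s, 0 < s → x + s • v ∈ D → s * a ≤ δ ∧ c * (s * ‖T‖) ^ 2 ≤ δ := by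
    intro s hs hmem
    have h := hball _ hmem
    have hrew : p - (x + s • v) = (δ - s * a) • n + (-s) • T := by
      rw [← sub_sub, hpxn, sub_smul, mul_smul]
      nth_rewrite 1 [hvdec]
      rw [smul_add, neg_smul]
      abel
    have hnorm : ‖p - (x + s • v)‖ ^ 2 = (δ - s * a) ^ 2 + (s * ‖T‖) ^ 2 := by
      rw [hrew, norm_add_sq_real, inner_smul_left, inner_smul_right, hTn, norm_smul, norm_smul,
        hnn, Real.norm_eq_abs, Real.norm_eq_abs, abs_neg, abs_of_pos hs, mul_one, sq_abs]
      ring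
    have hinn : ⟪p - (x + s • v), n⟫ = δ - s * a := by
      rw [hrew, inner_add_left, real_inner_smul_left, real_inner_smul_left,
        real_inner_self_eq_norm_sq, hnn, real_inner_comm, hTn]
      ring
    rw [hnorm, hinn] at h
    have h1 : 0 ≤ c * (δ - s * a) ^ 2 := by positivity
    have h2 : 0 ≤ c * (s * ‖T‖) ^ 2 := by positivity
    have h3 : 0 ≤ s * a := by positivity
    constructor <;> linarith
  have hspos := chordParam_pos hop hbdd hx hv
  have b1 : chordParam D x v * a ≤ δ := chordParam_mul_le hδ fun s hs hm => (key s hs hm).1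
  have b2 : chordParam D x v * (Real.sqrt c * ‖T‖) ≤ Real.sqrt δ := by
    refine chordParam_mul_le (Real.sqrt_pos.2 hδ) fun s hs hm => ?_
    refine Real.le_sqrt_of_sq_le ?_
    have := (key s hs hm).2
    calc (s * (Real.sqrt c * ‖T‖)) ^ 2 = Real.sqrt c ^ 2 * (s * ‖T‖) ^ 2 := by ring
      _ = c * (s * ‖T‖) ^ 2 := by rw [Real.sq_sqrt hc.le]
      _ ≤ δ := this
  have d1 : a / δ ≤ 1 / chordParam D x v := by
    rw [div_le_div_iff₀ hδ hspos]; linarith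
  have d2 : Real.sqrt c * ‖T‖ / Real.sqrt δ ≤ 1 / chordParam D x v := by
    rw [div_le_div_iff₀ (Real.sqrt_pos.2 hδ) hspos]; linarith
  have d3 : 0 ≤ 1 / chordParam D x (-v) := one_div_nonneg.2 (chordParam_nonneg x (-v))
  unfold hilbertFinsler
  linarith

/-- Boundary lower estimate for the Hilbert metric of a strongly convex
domain: `h_D(x,v) ≥ A⁻¹(‖v_N‖/(2δ_D(x)) + ‖v_T‖/δ_D(x)^{1/2})` near the boundary, where
`p = π(x)` is the nearest boundary point of `x`. -/
theorem hilbert_metric_boundary_lower_estimate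
    (d : ℕ) (hd : 2 ≤ d) (D : Set (Euc d)) (hD : IsStronglyConvexDomain D) :
    ∃ ε : ℝ, 0 < ε ∧ ∃ A : ℝ, 1 ≤ A ∧
      ∀ x ∈ D, Metric.infDist x (frontier D) < ε →
        ∀ p ∈ frontier D, dist x p = Metric.infDist x (frontier D) →
          ∀ v : Euc d,
            A⁻¹ * (‖vN x p v‖ / (2 * Metric.infDist x (frontier D))
                + ‖vT x p v‖ / Real.sqrt (Metric.infDist x (frontier D)))
              ≤ hilbertFinsler D x v := by
  obtain ⟨hop, -, hbdd, hconv, U, u, hU, -, hu, hDU, hfr, hne, hhess⟩ := hD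
  obtain ⟨c₀, hc₀, hquad⟩ := exists_global_quadratic hbdd hconv hU hu hDU hfr hhess
  -- An upper bound for the gradient on the compact boundary.
  obtain ⟨G, hG0, hG⟩ : ∃ G > 0, ∀ p ∈ frontier D, ‖fderiv ℝ u p‖ ≤ G := by
    have hK : IsCompact (frontier D) := Metric.isCompact_of_isClosed_isBounded isClosed_frontier
      (hbdd.closure.subset frontier_subset_closure)
    have hcont : ContinuousOn (fderiv ℝ u) (frontier D) :=
      (hu.continuousOn_fderiv_of_isOpen hU (by norm_num)).mono
        (fun p hp => by rw [hfr] at hp; exact hp.1)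
    obtain ⟨C, hC⟩ := hK.exists_bound_of_continuousOn hcont
    exact ⟨max C 1, by positivity, fun p hp => (hC p hp).trans (le_max_left _ _)⟩
  set c := c₀ / G with hcdef
  have hc : 0 < c := by positivity
  have hsc : 0 < Real.sqrt c := Real.sqrt_pos.2 hc
  refine ⟨1, one_pos, max 2 (4 / Real.sqrt c), le_trans (by norm_num) (le_max_left _ _), ?_⟩
  intro x hx _ p hp hdist v
  set δ := infDist x (frontier D) with hδdef
  have hδ : 0 < δ := by
    rw [hδdef, ← infDist_pos_iff_notMem_closure ⟨p, hp⟩, isClosed_frontier.closure_eq,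
      hop.frontier_eq]
    exact fun h => h.2 hx
  have hpx : ‖p - x‖ = δ := by rw [← dist_eq_norm, dist_comm, hdist]
  have hnn : ‖nvec x p‖ = 1 := by
    rw [nvec, norm_smul, norm_inv, norm_norm, hpx, inv_mul_cancel₀ hδ.ne']
  have hball : ∀ y ∈ D, c * ‖p - y‖ ^ 2 ≤ ⟪p - y, nvec x p⟫ := by
    intro y hy
    have h1 := hquad p hp y (subset_closure hy)
    have hgpos : 0 < ‖fderiv ℝ u p‖ := norm_pos_iff.2 (hne p hp)
    rw [← map_neg, neg_sub, fderiv_eq_norm_mul_inner hop hconv hU hu hDU hfr hx hp hdist hδ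
      (hne p hp), norm_sub_rev] at h1
    have h2 : 0 ≤ ⟪p - y, nvec x p⟫ := by
      refine nonneg_of_mul_nonneg_right (le_trans ?_ h1) hgpos
      positivity
    have h3 := mul_le_mul_of_nonneg_right (hG p hp) h2
    rw [hcdef, div_mul_eq_mul_div, div_le_iff₀ hG0]
    linarith
  have hvN : ∀ v, ‖vN x p v‖ = |⟪v, nvec x p⟫| := by
    intro v
    rw [vN, norm_smul, hnn, mul_one, Real.norm_eq_abs]
  -- Reversing `v` swaps the two ends of the chord, so `v` may be assumed to point outwards.
  have main : 1 / 4 * (|⟪v, nvec x p⟫| / δ + Real.sqrt c * ‖vT x p v‖ / Real.sqrt δ)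
      ≤ hilbertFinsler D x v := by
    rcases eq_or_ne v 0 with rfl | hv
    · have : 0 ≤ hilbertFinsler D x 0 := by
        have := chordParam_nonneg (D := D) x 0
        have := chordParam_nonneg (D := D) x (-0)
        unfold hilbertFinsler
        positivity
      simpa [vT, vN] using this
    rcases le_total 0 ⟪v, nvec x p⟫ with ha | ha
    · rw [abs_of_nonneg ha]
      exact hilbertFinsler_lower_of_nonneg hop hbdd hx hc hδ hpx hball hv ha
    · have h := hilbertFinsler_lower_of_nonneg hop hbdd hx hc hδ hpx hball (neg_ne_zero.2 hv)
        (by rw [inner_neg_left]; linarith)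
      have hT : vT x p (-v) = -vT x p v := by
        simp only [vT, vN, inner_neg_left, neg_smul]
        abel
      rwa [hilbertFinsler_neg, hT, norm_neg, inner_neg_left, ← abs_of_nonpos ha] at h
  refine le_trans ?_ main
  rw [hvN]
  set A := max 2 (4 / Real.sqrt c) with hA
  have hA0 : 0 < A := lt_of_lt_of_le two_pos (le_max_left _ _)
  have hA1 : A⁻¹ ≤ 1 / 2 := by
    rw [inv_le_comm₀ hA0 (by norm_num)]
    norm_num
    exact le_max_left _ _
  have hA2 : A⁻¹ ≤ Real.sqrt c / 4 := by
    rw [inv_le_comm₀ hA0 (by positivity), inv_div]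
    exact le_max_right _ _
  have e1 : |⟪v, nvec x p⟫| / (2 * δ) = 1 / 2 * (|⟪v, nvec x p⟫| / δ) := by
    field_simp
  have e2 : Real.sqrt c * ‖vT x p v‖ / Real.sqrt δ
      = Real.sqrt c * (‖vT x p v‖ / Real.sqrt δ) := by ring
  rw [e1, e2]
  have p1 : 0 ≤ |⟪v, nvec x p⟫| / δ := by positivity
  have p2 : 0 ≤ ‖vT x p v‖ / Real.sqrt δ := by positivity
  have q1 := mul_le_mul_of_nonneg_right hA1 p1
  have q2 := mul_le_mul_of_nonneg_right hA2 p2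
  linarith
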